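/- Let (X,μ) and (Y,ν) be standard Borel spaces equipped with σ-finite Borel measures, and let κ₁, κ₂ ⊆ X × Y be ω-closed sets. Call an ω-closed set κ an operator U₀-set if the only Arveson measure σ on Y × X satisfying |σ|({(y,x) ∈ Y × X : (x,y) ∉ κ}) = 0 and such that the associated pseudo-integral operator T_σ is compact, is σ = 0. If κ₁ and κ₂ are both operator U₀-sets, then κ₁ ∪ κ₂ is an operator U₀-set. -/

import Mathlib

/-!
The complement of `κ₁` is, up to a marginally null set, a countable union of measurable rectangles
`α i × β i`. Marginally null sets are null for every Arveson measure, because the marginals of an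
Arveson measure are dominated by multiples of `μ` and `ν`. If `σ` is carried by `κ₁ ∪ κ₂`, its
restriction to a rectangle `α i × β i` is therefore carried by `κ₂`; the pseudo-integral operator of
this restriction is the compression `P(β i) T_σ P(α i)`, where `P(s)` is multiplication by the
indicator of `s`, and it is compact when `T_σ` is. As `κ₂` is an operator `U₀`-set, the restriction
vanishes for every `i`. Hence `σ` is carried by `κ₁`, and `σ = 0` because `κ₁` is an operator
`U₀`-set.
-/

open MeasureTheory

/-- A subset of `X × Y` is marginally null if it is contained in
`(X₀ × Y) ∪ (X × Y₀)` with `μ X₀ = 0` and `ν Y₀ = 0`. -/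
def MarginallyNull {X Y : Type*} [MeasurableSpace X] [MeasurableSpace Y]
    (μ : Measure X) (ν : Measure Y) (M : Set (X × Y)) : Prop :=
  ∃ (X₀ : Set X) (Y₀ : Set Y), MeasurableSet X₀ ∧ MeasurableSet Y₀ ∧
    μ X₀ = 0 ∧ ν Y₀ = 0 ∧ M ⊆ (X₀ ×ˢ (Set.univ : Set Y)) ∪ ((Set.univ : Set X) ×ˢ Y₀)

/-- `κ ⊆ X × Y` is ω-closed if its complement differs from a countable union of
measurable rectangles by a marginally null set. -/
def IsOmegaClosed {X Y : Type*} [MeasurableSpace X] [MeasurableSpace Y]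
    (μ : Measure X) (ν : Measure Y) (κ : Set (X × Y)) : Prop :=
  ∃ (α : ℕ → Set X) (β : ℕ → Set Y),
    (∀ i, MeasurableSet (α i)) ∧ (∀ i, MeasurableSet (β i)) ∧
    MarginallyNull μ ν (symmDiff κᶜ (⋃ i, α i ×ˢ β i))

/-- `κ ⊆ X × Y` is an operator `U₀`-set if the only Arveson measure `σ` on `Y × X`
(encoded by its total variation `τ` and unimodular polar density `w`, so that
`σ(E) = ∫_E w dτ` and `|σ| = τ`) with `|σ|({(y,x) : (x,y) ∉ κ}) = 0` whose associated
pseudo-integral operator `T_σ` is compact, is `σ = 0` (i.e. `τ = 0`). -/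
def OperatorU0Set {X Y : Type*} [MeasurableSpace X] [MeasurableSpace Y]
    (μ : Measure X) (ν : Measure Y) (κ : Set (X × Y)) : Prop :=
  ∀ (τ : Measure (Y × X)) (w : Y × X → ℂ) (c : ℝ),
    IsFiniteMeasure τ → Measurable w → (∀ᵐ p ∂τ, ‖w p‖ = 1) → 0 < c →
    (∀ α : Set X, MeasurableSet α → τ (Set.univ ×ˢ α) ≤ ENNReal.ofReal c * μ α) →
    (∀ β : Set Y, MeasurableSet β → τ (β ×ˢ Set.univ) ≤ ENNReal.ofReal c * ν β) →
    τ {p : Y × X | (p.2, p.1) ∉ κ} = 0 →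
    ∀ T : Lp ℂ 2 μ →L[ℂ] Lp ℂ 2 ν,
      (∀ (f : Lp ℂ 2 μ) (g : Lp ℂ 2 ν),
        ∫ y, T f y * (starRingEnd ℂ) (g y) ∂ν
          = ∫ p, f p.2 * (starRingEnd ℂ) (g p.1) * w p ∂τ) →
      IsCompactOperator ⇑T →
      τ = 0

/-- The projection `P(s)` on `L²(μ)` given by multiplication with the indicator of `s`. -/
noncomputable def indicatorProj {X : Type*} [MeasurableSpace X] (μ : Measure X) (s : Set X)
    (hs : MeasurableSet s) : Lp ℂ 2 μ →L[ℂ] Lp ℂ 2 μ :=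
  LinearMap.mkContinuous
    { toFun := fun f => ((Lp.memLp f).indicator hs).toLp (s.indicator f)
      map_add' := by
        intro f g
        rw [← MemLp.toLp_add]
        refine (MemLp.toLp_eq_toLp_iff _ _).2 ?_
        filter_upwards [Lp.coeFn_add f g] with x hx
        by_cases h : x ∈ s
        · simpa only [Pi.add_apply, Set.indicator_of_mem h] using hx
        · simp [h]
      map_smul' := by
        intro a f
        rw [RingHom.id_apply, ← MemLp.toLp_const_smul]
        refine (MemLp.toLp_eq_toLp_iff _ _).2 ?_
        filter_upwards [Lp.coeFn_smul a f] with x hx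
        by_cases h : x ∈ s
        · simpa only [Pi.smul_apply, Set.indicator_of_mem h] using hx
        · simp [h] }
    1 (by
      intro f
      rw [one_mul]
      refine Lp.norm_le_norm_of_ae_le ?_
      simp only [LinearMap.coe_mk, AddHom.coe_mk]
      filter_upwards [((Lp.memLp f).indicator hs).coeFn_toLp] with x hx
      rw [hx]
      exact norm_indicator_le_norm_self _ _)

lemma indicatorProj_ae {X : Type*} [MeasurableSpace X] (μ : Measure X) (s : Set X)
    (hs : MeasurableSet s) (f : Lp ℂ 2 μ) : indicatorProj μ s hs f =ᵐ[μ] s.indicator f :=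
  ((Lp.memLp f).indicator hs).coeFn_toLp

/-- If `T` is the pseudo-integral operator of `σ = w dτ`, then `P(β) T P(α)` is the
pseudo-integral operator of the restriction of `σ` to `β × α`. -/
lemma compression_integral {X Y : Type*} [MeasurableSpace X] [MeasurableSpace Y]
    {μ : Measure X} {ν : Measure Y} {τ : Measure (Y × X)} {w : Y × X → ℂ}
    (hq₂ : Measure.QuasiMeasurePreserving Prod.snd τ μ)
    (hq₁ : Measure.QuasiMeasurePreserving Prod.fst τ ν)
    {T : Lp ℂ 2 μ →L[ℂ] Lp ℂ 2 ν}
    (hT : ∀ (f : Lp ℂ 2 μ) (g : Lp ℂ 2 ν),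
        ∫ y, T f y * (starRingEnd ℂ) (g y) ∂ν
          = ∫ p, f p.2 * (starRingEnd ℂ) (g p.1) * w p ∂τ)
    {α : Set X} {β : Set Y} (hα : MeasurableSet α) (hβ : MeasurableSet β)
    (f : Lp ℂ 2 μ) (g : Lp ℂ 2 ν) :
    ∫ y, (indicatorProj ν β hβ ∘L T ∘L indicatorProj μ α hα) f y * (starRingEnd ℂ) (g y) ∂ν
      = ∫ p, f p.2 * (starRingEnd ℂ) (g p.1) * w p ∂(τ.restrict (β ×ˢ α)) := by
  -- Move `P(β)` onto `g`, so that the identity for `T` applies to `P(α) f` and `P(β) g`.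
  calc _ = ∫ y, T (indicatorProj μ α hα f) y
            * (starRingEnd ℂ) (indicatorProj ν β hβ g y) ∂ν := by
        refine integral_congr_ae ?_
        filter_upwards [indicatorProj_ae ν β hβ (T (indicatorProj μ α hα f)),
          indicatorProj_ae ν β hβ g] with y h1 h2
        simp only [ContinuousLinearMap.comp_apply]
        rw [h1, h2]
        by_cases h : y ∈ β <;> simp [h]
    _ = _ := by
        rw [hT, ← integral_indicator (hβ.prod hα)]
        refine integral_congr_ae ?_
        filter_upwards [hq₂.ae (indicatorProj_ae μ α hα f),
          hq₁.ae (indicatorProj_ae ν β hβ g)] with p h1 h2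
        rw [h1, h2]
        by_cases ha : p.2 ∈ α <;> by_cases hb : p.1 ∈ β <;> simp [Set.indicator, ha, hb]

/-- The union of two ω-closed operator `U₀`-sets is an operator
`U₀`-set. -/
theorem stmt_6
    {X Y : Type*} [MeasurableSpace X] [StandardBorelSpace X]
    [MeasurableSpace Y] [StandardBorelSpace Y]
    (μ : Measure X) (ν : Measure Y) [SigmaFinite μ] [SigmaFinite ν]
    (κ₁ κ₂ : Set (X × Y))
    (h₁ : IsOmegaClosed μ ν κ₁) (h₂ : IsOmegaClosed μ ν κ₂)
    (hU₁ : OperatorU0Set μ ν κ₁) (hU₂ : OperatorU0Set μ ν κ₂) :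
    OperatorU0Set μ ν (κ₁ ∪ κ₂) := by
  intro τ w c hfin hw hw1 hc hμ hν hsupp T hT hcpt
  obtain ⟨α, β, hα, hβ, X₀, Y₀, hX₀, hY₀, hμ₀, hν₀, hsub⟩ := h₁
  have hq₂ : Measure.QuasiMeasurePreserving Prod.snd τ μ := by
    refine ⟨measurable_snd, Measure.AbsolutelyContinuous.mk fun s hs h0 => ?_⟩
    rw [Measure.map_apply measurable_snd hs, ← Set.univ_prod]
    exact le_antisymm ((hμ s hs).trans (by simp [h0])) zero_le
  have hq₁ : Measure.QuasiMeasurePreserving Prod.fst τ ν := by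
    refine ⟨measurable_fst, Measure.AbsolutelyContinuous.mk fun s hs h0 => ?_⟩
    rw [Measure.map_apply measurable_fst hs, ← Set.prod_univ]
    exact le_antisymm ((hν s hs).trans (by simp [h0])) zero_le
  -- The exceptional set of the ω-closed set `κ₁` is null for `τ`.
  have hnull : τ (Prod.snd ⁻¹' X₀ ∪ Prod.fst ⁻¹' Y₀) = 0 :=
    measure_union_null (hq₂.preimage_null hμ₀) (hq₁.preimage_null hν₀)
  have hrect : ∀ i, τ (β i ×ˢ α i) = 0 := by
    intro i
    have hR : MeasurableSet (β i ×ˢ α i) := (hβ i).prod (hα i)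
    have h0 : τ.restrict (β i ×ˢ α i) = 0 := by
      refine hU₂ (τ.restrict (β i ×ˢ α i)) w c inferInstance hw (ae_restrict_of_ae hw1) hc
        (fun s hs => (Measure.restrict_apply_le _ _).trans (hμ s hs))
        (fun s hs => (Measure.restrict_apply_le _ _).trans (hν s hs)) ?_
        (indicatorProj ν (β i) (hβ i) ∘L T ∘L indicatorProj μ (α i) (hα i))
        (compression_integral hq₂ hq₁ hT (hα i) (hβ i))
        ((hcpt.comp_clm (indicatorProj μ (α i) (hα i))).clm_comp
          (indicatorProj ν (β i) (hβ i)))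
      rw [Measure.restrict_apply' hR]
      refine measure_mono_null ?_ (measure_union_null hsupp hnull)
      rintro ⟨y, x⟩ ⟨hκ₂, hy, hx⟩
      by_cases hκ₁ : (x, y) ∈ κ₁
      · right
        have := hsub (Or.inr ⟨Set.mem_iUnion.2 ⟨i, hx, hy⟩, not_not.2 hκ₁⟩)
        simpa using this
      · left
        exact fun h => h.elim hκ₁ hκ₂
    exact Measure.restrict_eq_zero.1 h0
  refine hU₁ τ w c hfin hw hw1 hc hμ hν ?_ T hT hcpt
  refine measure_mono_null ?_ (measure_union_null (measure_iUnion_null hrect) hnull)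
  rintro ⟨y, x⟩ hκ₁
  by_cases h : (x, y) ∈ ⋃ i, α i ×ˢ β i
  · left
    obtain ⟨i, hx, hy⟩ := Set.mem_iUnion.1 h
    exact Set.mem_iUnion.2 ⟨i, hy, hx⟩
  · right
    have := hsub (Or.inl ⟨hκ₁, h⟩)
    simpa using this
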